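/- Let G ⊆ O(n+1) be a closed subgroup with -Id ∉ G that contains the subgroup O(n) acting trivially on the last coordinate vector e_{n+1} and naturally on its orthogonal complement. Then G = O(n). -/

import Mathlib

/-!
Let `θ` be the angle between `e` and `T e` for some `T ∈ G`. If `w ⟂ e` is a unit vector, the
reflection `ρ` in the hyperplane `wᗮ` fixes `e`, so `T⁻¹ ρ T ∈ G`; it moves `e` by the angle `φ`
between `T e` and `ρ (T e)`, where `⟪w, T e⟫ = ‖e‖ sin (φ / 2)`. In dimension at least three the
unit vectors orthogonal to `e` form a connected set, so every `φ` with `sin (φ / 2) ≤ sin θ` is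
attained. If `0 < θ < π`, this first produces the angles `π / 2 ^ k` with `k` large, and then, by
repeated doubling, the angle `π`. But an `S ∈ G` with `S e = -e` gives `-S ∈ G`, whence `-1 ∈ G`.
-/

section InnerProductSpace

open InnerProductGeometry RealInnerProductSpace Real

variable {E : Type*} [NormedAddCommGroup E] [InnerProductSpace ℝ E]

lemma exists_norm_eq_one_inner_eq (hE : 1 < Module.rank ℝ E) {u : E} {r : ℝ} (hr : |r| ≤ ‖u‖) :
    ∃ w : E, ‖w‖ = 1 ∧ ⟪w, u⟫ = r := by
  have : Nontrivial E := rank_pos_iff_nontrivial.mp (zero_lt_one.trans hE)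
  obtain rfl | hu := eq_or_ne u 0
  · obtain ⟨w, hw⟩ := exists_norm_eq E zero_le_one
    exact ⟨w, hw, by simpa [eq_comm] using hr⟩
  · have hunit : ‖‖u‖⁻¹ • u‖ = 1 := norm_smul_inv_norm (𝕜 := ℝ) hu
    have hinner : ⟪‖u‖⁻¹ • u, u⟫ = ‖u‖ := by
      rw [real_inner_smul_left, real_inner_self_eq_norm_sq]
      field
    obtain ⟨w, hw, hwu⟩ := (isPreconnected_sphere hE 0 1).intermediate_value
      (a := -(‖u‖⁻¹ • u)) (b := ‖u‖⁻¹ • u) (f := fun w ↦ ⟪w, u⟫)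
      (by simpa using hunit) (by simpa using hunit) (by fun_prop)
      (show r ∈ Set.Icc _ _ by simpa only [inner_neg_left, hinner, Set.mem_Icc] using abs_le.mp hr)
    exact ⟨w, by simpa using hw, hwu⟩

lemma one_lt_rank_orthogonal_span_singleton (hE : 2 < Module.rank ℝ E) (e : E) :
    1 < Module.rank ℝ (ℝ ∙ e)ᗮ := by
  by_contra! h
  have hspan : Module.rank ℝ (ℝ ∙ e) ≤ 1 := by simpa using rank_span_le (R := ℝ) {e}
  refine hE.not_ge ?_
  calc
    Module.rank ℝ E = Module.rank ℝ ↥((ℝ ∙ e) ⊔ (ℝ ∙ e)ᗮ) := by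
      rw [Submodule.sup_orthogonal_of_hasOrthogonalProjection, rank_top]
    _ ≤ Module.rank ℝ (ℝ ∙ e) + Module.rank ℝ (ℝ ∙ e)ᗮ :=
      Submodule.rank_add_le_rank_add_rank _ _
    _ ≤ 1 + 1 := add_le_add hspan h
    _ = 2 := one_add_one_eq_two

lemma norm_starProjection_orthogonal_span_singleton (e x : E) :
    ‖(ℝ ∙ e)ᗮ.starProjection x‖ = ‖x‖ * sin (angle e x) := by
  have hcos : ‖(ℝ ∙ e).starProjection x‖ ^ 2 = (‖x‖ * cos (angle e x)) ^ 2 := by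
    obtain rfl | he := eq_or_ne e 0
    · simp
    · rw [Submodule.starProjection_singleton, norm_smul, ← cos_angle_mul_norm_mul_norm,
        RCLike.ofReal_real_eq_id, id, norm_eq_abs, mul_pow, sq_abs]
      field
  rw [← sq_eq_sq₀ (norm_nonneg _) (mul_nonneg (norm_nonneg _) (sin_angle_nonneg _ _))]
  linear_combination (-1 : ℝ) * (ℝ ∙ e).norm_sq_eq_add_norm_sq_starProjection x - hcos
    - ‖x‖ ^ 2 * sin_sq_add_cos_sq (angle e x)

lemma exists_norm_eq_one_inner_eq_zero_inner_eq (hE : 2 < Module.rank ℝ E) {e x : E} {r : ℝ}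
    (hr : |r| ≤ ‖x‖ * sin (angle e x)) : ∃ w : E, ‖w‖ = 1 ∧ ⟪w, e⟫ = 0 ∧ ⟪w, x⟫ = r := by
  rw [← norm_starProjection_orthogonal_span_singleton] at hr
  obtain ⟨w, hw, hwx⟩ :=
    exists_norm_eq_one_inner_eq (one_lt_rank_orthogonal_span_singleton hE e)
      (u := (ℝ ∙ e)ᗮ.orthogonalProjectionOnto x) hr
  exact ⟨w, hw, Submodule.mem_orthogonal_singleton_iff_inner_left.mp w.2, by simpa using hwx⟩

lemma angle_reflection_orthogonal_span_singleton {w x : E} {φ : ℝ} (hw : ‖w‖ = 1) (hx : x ≠ 0)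
    (hφ : φ ∈ Set.Icc 0 π) (hwx : ⟪w, x⟫ = ‖x‖ * sin (φ / 2)) :
    angle x ((ℝ ∙ w)ᗮ.reflection x) = φ := by
  have hinner : ⟪x, (ℝ ∙ w)ᗮ.reflection x⟫ = ‖x‖ * ‖x‖ * cos φ := by
    have hcos : cos φ = 1 - 2 * sin (φ / 2) ^ 2 := by
      rw [sin_sq_eq_half_sub, mul_div_cancel₀ φ two_ne_zero]
      ring
    rw [Submodule.reflection_orthogonal_apply, Submodule.reflection_singleton_apply, hw]
    simp only [RCLike.ofReal_one, one_pow, div_one, neg_sub, inner_sub_right, inner_smul_right,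
      real_inner_self_eq_norm_mul_norm, real_inner_comm w x, hwx, hcos, two_smul, inner_add_right]
    ring
  rw [angle, LinearIsometryEquiv.norm_map, hinner, mul_div_cancel_left₀ _ (by simpa using hx),
    arccos_cos hφ.1 hφ.2]

lemma eq_of_norm_eq_of_angle_eq_zero {x y : E} (hnorm : ‖x‖ = ‖y‖) (h : angle x y = 0) :
    x = y := by
  rw [← sub_eq_zero, ← norm_eq_zero, norm_sub_eq_abs_sub_norm_of_angle_eq_zero h, hnorm, sub_self,
    abs_zero]

lemma eq_neg_of_norm_eq_of_angle_eq_pi {x y : E} (hnorm : ‖x‖ = ‖y‖) (h : angle x y = π) :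
    x = -y :=
  eq_of_norm_eq_of_angle_eq_zero (by rwa [norm_neg]) (by rw [angle_neg_right, h, sub_self])

variable {e : E} {G : Subgroup (E ≃ₗᵢ[ℝ] E)}

lemma exists_mem_angle_apply_eq (hE : 2 < Module.rank ℝ E)
    (hG : ∀ T : E ≃ₗᵢ[ℝ] E, T e = e → T ∈ G) (he : e ≠ 0) {T : E ≃ₗᵢ[ℝ] E} (hT : T ∈ G) {φ : ℝ}
    (hφ : φ ∈ Set.Icc 0 π) (hsin : sin (φ / 2) ≤ sin (angle e (T e))) :
    ∃ S ∈ G, angle e (S e) = φ := by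
  have hsin_nonneg : 0 ≤ sin (φ / 2) :=
    sin_nonneg_of_nonneg_of_le_pi (by linarith [hφ.1]) (by linarith [hφ.1, hφ.2])
  obtain ⟨w, hw, hwe, hwT⟩ :
      ∃ w : E, ‖w‖ = 1 ∧ ⟪w, e⟫ = 0 ∧ ⟪w, T e⟫ = ‖T e‖ * sin (φ / 2) :=
    exists_norm_eq_one_inner_eq_zero_inner_eq hE <| by
      rw [abs_of_nonneg (by positivity)]
      gcongr
  set ρ := (ℝ ∙ w)ᗮ.reflection
  have hρ : ρ ∈ G := hG ρ <| Submodule.reflection_mem_subspace_eq_self <|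
    Submodule.mem_orthogonal_singleton_iff_inner_right.mpr hwe
  refine ⟨T⁻¹ * ρ * T, G.mul_mem (G.mul_mem (G.inv_mem hT) hρ) hT, ?_⟩
  calc
    angle e ((T⁻¹ * ρ * T) e) = angle (T e) (T (T⁻¹ (ρ (T e)))) :=
      (T.toLinearIsometry.angle_map _ _).symm
    _ = angle (T e) (ρ (T e)) := by rw [LinearIsometryEquiv.coe_inv, T.apply_symm_apply]
    _ = φ := angle_reflection_orthogonal_span_singleton hw (by simpa using he) hφ hwT

lemma exists_mem_angle_apply_eq_pi_of_pi_div_two_pow (hE : 2 < Module.rank ℝ E)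
    (hG : ∀ T : E ≃ₗᵢ[ℝ] E, T e = e → T ∈ G) (he : e ≠ 0) (k : ℕ)
    (hk : ∃ T ∈ G, angle e (T e) = π / 2 ^ k) : ∃ S ∈ G, angle e (S e) = π := by
  induction k with
  | zero => simpa using hk
  | succ k ih =>
    obtain ⟨T, hT, hangle⟩ := hk
    have hhalf : π / 2 ^ k / 2 = angle e (T e) := by rw [hangle, pow_succ, div_div]
    exact ih <| exists_mem_angle_apply_eq hE hG he hT
      ⟨by positivity, div_le_self pi_nonneg (one_le_pow₀ one_le_two)⟩ (by rw [hhalf])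

lemma exists_mem_apply_eq_neg (hE : 2 < Module.rank ℝ E)
    (hG : ∀ T : E ≃ₗᵢ[ℝ] E, T e = e → T ∈ G) {T : E ≃ₗᵢ[ℝ] E} (hT : T ∈ G) (hTe : T e ≠ e) :
    ∃ S ∈ G, S e = -e := by
  have he : e ≠ 0 := by
    rintro rfl
    exact hTe (map_zero T)
  suffices ∃ S ∈ G, angle e (S e) = π by
    obtain ⟨S, hS, hangle⟩ := this
    exact ⟨S, hS, eq_neg_of_norm_eq_of_angle_eq_pi (S.norm_map e) (by rwa [angle_comm])⟩
  obtain hsin | hsin := (sin_angle_nonneg e (T e)).eq_or_lt'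
  · refine ⟨T, hT, (sin_eq_zero_iff_angle_eq_zero_or_angle_eq_pi.mp hsin).resolve_left fun h ↦ ?_⟩
    exact hTe (eq_of_norm_eq_of_angle_eq_zero (T.norm_map e).symm h).symm
  · obtain ⟨k, hk⟩ : ∃ k : ℕ, π / 2 ^ k < sin (angle e (T e)) := by
      obtain ⟨k, hk⟩ := pow_unbounded_of_one_lt (π / sin (angle e (T e))) one_lt_two
      exact ⟨k, (div_lt_comm₀ hsin (by positivity)).mp hk⟩
    have hnonneg : 0 ≤ π / 2 ^ k := by positivity
    refine exists_mem_angle_apply_eq_pi_of_pi_div_two_pow hE hG he k <|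
      exists_mem_angle_apply_eq hE hG he hT
        ⟨hnonneg, div_le_self pi_nonneg (one_le_pow₀ one_le_two)⟩ ?_
    linarith [sin_le (div_nonneg hnonneg zero_le_two)]

theorem stmt_9_general (hE : 2 < Module.rank ℝ E) (hneg : LinearIsometryEquiv.neg ℝ ∉ G)
    (hG : ∀ T : E ≃ₗᵢ[ℝ] E, T e = e → T ∈ G) {T : E ≃ₗᵢ[ℝ] E} : T ∈ G ↔ T e = e := by
  refine ⟨fun hT ↦ ?_, hG T⟩
  by_contra hTe
  obtain ⟨S, hS, hSe⟩ := exists_mem_apply_eq_neg hE hG hT hTe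
  have hnegS : LinearIsometryEquiv.neg ℝ * S ∈ G := hG _ (by simp [hSe])
  exact hneg ((G.mul_mem_cancel_right hS).mp hnegS)

end InnerProductSpace

section OrthogonalGroup

variable {ι : Type*} [Fintype ι] [DecidableEq ι]

/-- The orthogonal group of matrices as the group of linear isometries of Euclidean space, a matrix
acting by `Matrix.mulVec`. -/
noncomputable def orthogonalGroupEquivLinearIsometryEquiv :
    Matrix.orthogonalGroup ι ℝ ≃* (EuclideanSpace ℝ ι ≃ₗᵢ[ℝ] EuclideanSpace ℝ ι) :=
  (Unitary.mapEquiv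
    { (Matrix.toEuclideanCLM (n := ι) (𝕜 := ℝ)).toRingEquiv.toMulEquiv with
      map_star' := map_star (Matrix.toEuclideanCLM (n := ι) (𝕜 := ℝ)) }).toMulEquiv.trans
    Unitary.linearIsometryEquiv

lemma orthogonalGroupEquivLinearIsometryEquiv_toLp (T : Matrix.orthogonalGroup ι ℝ) (v : ι → ℝ) :
    orthogonalGroupEquivLinearIsometryEquiv T (WithLp.toLp 2 v) =
      WithLp.toLp 2 ((T : Matrix ι ι ℝ).mulVec v) :=
  rfl

lemma orthogonalGroupEquivLinearIsometryEquiv_toLp_eq_self {T : Matrix.orthogonalGroup ι ℝ}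
    {v : ι → ℝ} :
    orthogonalGroupEquivLinearIsometryEquiv T (WithLp.toLp 2 v) = WithLp.toLp 2 v ↔
      (T : Matrix ι ι ℝ).mulVec v = v := by
  rw [orthogonalGroupEquivLinearIsometryEquiv_toLp, (WithLp.toLp_injective 2).eq_iff]

lemma orthogonalGroupEquivLinearIsometryEquiv_neg_one :
    orthogonalGroupEquivLinearIsometryEquiv (-1 : Matrix.orthogonalGroup ι ℝ) =
      LinearIsometryEquiv.neg ℝ := by
  ext x i
  rw [← x.toLp_ofLp, orthogonalGroupEquivLinearIsometryEquiv_toLp, Unitary.coe_neg,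
    OneMemClass.coe_one, Matrix.neg_mulVec, Matrix.one_mulVec]
  rfl

theorem mem_iff_mulVec_eq_self_of_neg_one_notMem (hι : 2 < Fintype.card ι) {v : ι → ℝ}
    {G : Subgroup (Matrix.orthogonalGroup ι ℝ)} (hneg : -1 ∉ G)
    (hG : ∀ T : Matrix.orthogonalGroup ι ℝ, (T : Matrix ι ι ℝ).mulVec v = v → T ∈ G)
    {T : Matrix.orthogonalGroup ι ℝ} : T ∈ G ↔ (T : Matrix ι ι ℝ).mulVec v = v := by
  let Φ := orthogonalGroupEquivLinearIsometryEquiv (ι := ι)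
  have hmem (T) : Φ T ∈ G.map Φ.toMonoidHom ↔ T ∈ G :=
    Subgroup.mem_map_iff_mem Φ.injective
  have hrank : 2 < Module.rank ℝ (EuclideanSpace ℝ ι) := by
    exact_mod_cast Module.lt_rank_of_lt_finrank (hι.trans_eq finrank_euclideanSpace.symm)
  rw [← hmem, ← orthogonalGroupEquivLinearIsometryEquiv_toLp_eq_self]
  refine stmt_9_general hrank ?_ (Φ.surjective.forall.mpr fun S hS ↦ ?_)
  · rwa [← orthogonalGroupEquivLinearIsometryEquiv_neg_one, hmem]
  · exact (hmem S).mpr (hG S (orthogonalGroupEquivLinearIsometryEquiv_toLp_eq_self.mp hS))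

end OrthogonalGroup

/-- Let `G ⊆ O(n+1)` be a closed subgroup with `-Id ∉ G` containing the copy of `O(n)` that
fixes the last basis vector `e_{n+1}` (equivalently, the stabilizer of `e_{n+1}` in `O(n+1)`).
Then `G` equals this copy of `O(n)`. -/
theorem stmt_9 (n : ℕ) (hn : 2 ≤ n)
    (G : Subgroup (Matrix.orthogonalGroup (Fin (n + 1)) ℝ))
    (hclosed : IsClosed (G : Set (Matrix.orthogonalGroup (Fin (n + 1)) ℝ)))
    (hneg : ∀ T ∈ G, (T : Matrix (Fin (n + 1)) (Fin (n + 1)) ℝ) ≠ -1)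
    (hsub : ∀ T : Matrix.orthogonalGroup (Fin (n + 1)) ℝ,
      (T : Matrix (Fin (n + 1)) (Fin (n + 1)) ℝ).mulVec (Pi.single (Fin.last n) 1)
        = Pi.single (Fin.last n) 1 → T ∈ G) :
    ∀ T : Matrix.orthogonalGroup (Fin (n + 1)) ℝ, T ∈ G ↔
      (T : Matrix (Fin (n + 1)) (Fin (n + 1)) ℝ).mulVec (Pi.single (Fin.last n) 1)
        = Pi.single (Fin.last n) 1 := by
  exact fun _ ↦ mem_iff_mulVec_eq_self_of_neg_one_notMem (by rw [Fintype.card_fin]; lia)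
    (fun h ↦ hneg _ h rfl) hsub
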